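/- Let G₁,…,G₈ be the Gell-Mann matrices, and for x, y ∈ ℝ⁸ let the star product be (x⋆y)_k = √3·∑_{i,j=1}^{8} d_{ijk} x_i y_j with d_{ijk} = (1/4)·Re Tr((G_iG_j + G_jG_i)G_k). For r ∈ ℝ⁸ set ρ(r) = (1/3)(I + √3·∑_{k=1}^{8} r_k G_k). Then: (1) ρ(r) is positive semidefinite if and only if ‖r‖ ≤ 1 and 1 + 2⟨r, r⋆r⟩ ≥ 3⟨r, r⟩; (2) ρ(r)² = ρ(r) if and only if ‖r‖ = 1 and r⋆r = r. Here ⟨·,·⟩ and ‖·‖ are the Euclidean inner product and norm on ℝ⁸. -/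

import Mathlib

/-!
Write `M = ∑ k, r k • G k`, so that `ρ = (1/3)(1 + √3 M)`. The Gell-Mann matrices are traceless,
satisfy `tr (G i G j) = 2 δ i j`, and together with the identity span all `3 × 3` matrices
(`gellMann_expansion`). Expanding `M ^ 2` in this basis gives
`M ^ 2 = (2/3)‖r‖² + (1/√3) ∑ k, (r ⋆ r) k • G k` (`gmComb_sq`).

Idempotency follows by comparing coefficients of `ρ ^ 2` and `ρ` (`smul_one_add_gmComb_inj`): the
identity parts agree iff `‖r‖² = 1`, and the Gell-Mann parts agree iff `2 r + r ⋆ r = 3 r`.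

For positivity, the same identity gives `tr ρ = 1`, `tr ρ ^ 2 = (1 + 2‖r‖²)/3` and
`tr ρ ^ 3 = (1 + 6‖r‖² + 2⟨r, r ⋆ r⟩)/9`. These are the power sums of the eigenvalues of `ρ`. By
Newton's identities the elementary symmetric functions of the eigenvalues are `1`, `(1 - ‖r‖²)/3`
and `(1 - 3‖r‖² + 2⟨r, r ⋆ r⟩)/27`, and three real numbers are nonnegative iff their elementary
symmetric functions are (`nonneg_iff_power_sums`).
-/


noncomputable def gellMann : Fin 8 → Matrix (Fin 3) (Fin 3) ℂ :=
  ![!![0, 1, 0; 1, 0, 0; 0, 0, 0],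
    !![0, -Complex.I, 0; Complex.I, 0, 0; 0, 0, 0],
    !![1, 0, 0; 0, -1, 0; 0, 0, 0],
    !![0, 0, 1; 0, 0, 0; 1, 0, 0],
    !![0, 0, -Complex.I; 0, 0, 0; Complex.I, 0, 0],
    !![0, 0, 0; 0, 0, 1; 0, 1, 0],
    !![0, 0, 0; 0, 0, -Complex.I; 0, Complex.I, 0],
    !![((Real.sqrt 3 : ℝ) : ℂ)⁻¹, 0, 0; 0, ((Real.sqrt 3 : ℝ) : ℂ)⁻¹, 0;
       0, 0, -2 * ((Real.sqrt 3 : ℝ) : ℂ)⁻¹]]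

noncomputable def dGM (i j k : Fin 8) : ℝ :=
  (1 / 4) * ((gellMann i * gellMann j + gellMann j * gellMann i) * gellMann k).trace.re

noncomputable def starGM (x y : Fin 8 → ℝ) : Fin 8 → ℝ :=
  fun k => Real.sqrt 3 * ∑ i, ∑ j, dGM i j k * x i * y j

/-! ### The Gell-Mann basis -/

lemma gellMann_isHermitian (k : Fin 8) : (gellMann k).IsHermitian := by
  ext i j
  fin_cases k <;> fin_cases i <;> fin_cases j <;>
    simp [gellMann, Matrix.conjTranspose_apply]

lemma trace_gellMann (k : Fin 8) : (gellMann k).trace = 0 := by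
  fin_cases k <;> simp [gellMann, Matrix.trace_fin_three]
  ring

lemma ofReal_sqrt_three_sq : ((Real.sqrt 3 : ℝ) : ℂ) ^ 2 = 3 := by
  rw [← Complex.ofReal_pow, Real.sq_sqrt (by norm_num)]; norm_num

lemma ofReal_sqrt_three_inv_sq : (((Real.sqrt 3 : ℝ) : ℂ)⁻¹) ^ 2 = 1 / 3 := by
  rw [inv_pow, ofReal_sqrt_three_sq]; norm_num

/-- The matrix `∑ k, r k • G k` attached to a coefficient vector `r`. -/
noncomputable def gmComb (r : Fin 8 → ℝ) : Matrix (Fin 3) (Fin 3) ℂ :=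
  ∑ k, (r k : ℂ) • gellMann k

/-- Completeness of the Gell-Mann matrices together with the identity. -/
lemma gellMann_expansion (A : Matrix (Fin 3) (Fin 3) ℂ) :
    A = (A.trace / 3) • (1 : Matrix (Fin 3) (Fin 3) ℂ)
      + ∑ k, ((A * gellMann k).trace / 2) • gellMann k := by
  have hs := ofReal_sqrt_three_inv_sq
  ext i j
  fin_cases i <;> fin_cases j <;>
    simp [gellMann, Fin.sum_univ_eight, Matrix.trace_fin_three, Matrix.mul_apply,
      Fin.sum_univ_three] <;>
    ring_nf <;> simp only [hs, Complex.I_sq] <;> ring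

/-- The Gell-Mann matrices are orthogonal for the trace form. -/
lemma trace_gellMann_mul (i j : Fin 8) :
    (gellMann i * gellMann j).trace = if i = j then 2 else 0 := by
  have hs := ofReal_sqrt_three_inv_sq
  fin_cases i <;> fin_cases j <;>
    simp [gellMann, Matrix.trace_fin_three] <;>
    ring_nf <;> norm_num [hs, ← inv_pow]

/-! ### Traces of powers and the star product -/

lemma gmComb_isHermitian (r : Fin 8 → ℝ) : (gmComb r).IsHermitian := by
  unfold gmComb Matrix.IsHermitian
  rw [Matrix.conjTranspose_sum]
  refine Finset.sum_congr rfl fun k _ => ?_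
  rw [Matrix.conjTranspose_smul, gellMann_isHermitian k]
  simp

lemma trace_gmComb (r : Fin 8 → ℝ) : (gmComb r).trace = 0 := by
  simp [gmComb, Matrix.trace_sum, trace_gellMann]

lemma trace_gmComb_mul_gellMann (r : Fin 8 → ℝ) (k : Fin 8) :
    (gmComb r * gellMann k).trace = 2 * (r k : ℂ) := by
  simp [gmComb, Finset.sum_mul, Matrix.trace_sum, trace_gellMann_mul, mul_comm]

lemma trace_mul_gmComb (A : Matrix (Fin 3) (Fin 3) ℂ) (r : Fin 8 → ℝ) :
    (A * gmComb r).trace = ∑ k, (r k : ℂ) * (A * gellMann k).trace := by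
  simp [gmComb, Finset.mul_sum, Matrix.trace_sum]

lemma trace_gmComb_sq (r : Fin 8 → ℝ) :
    (gmComb r * gmComb r).trace = ((2 * ∑ k, r k ^ 2 : ℝ) : ℂ) := by
  rw [trace_mul_gmComb]
  simp only [trace_gmComb_mul_gellMann]
  push_cast
  rw [Finset.mul_sum]
  exact Finset.sum_congr rfl fun k _ => by ring

/-- The trace of a product of two Hermitian matrices is real. -/
lemma ofReal_re_trace_mul {A B : Matrix (Fin 3) (Fin 3) ℂ} (hA : A.IsHermitian)
    (hB : B.IsHermitian) : (((A * B).trace.re : ℝ) : ℂ) = (A * B).trace := by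
  apply Complex.conj_eq_iff_re.mp
  rw [starRingEnd_apply, ← Matrix.trace_conjTranspose, Matrix.conjTranspose_mul, hA, hB,
    Matrix.trace_mul_comm]

lemma gmComb_sq_isHermitian (r : Fin 8 → ℝ) : (gmComb r * gmComb r).IsHermitian := by
  simp [Matrix.IsHermitian, Matrix.conjTranspose_mul, (gmComb_isHermitian r).eq]

lemma gmComb_sq_eq_sum (r : Fin 8 → ℝ) :
    gmComb r * gmComb r
      = ∑ i, ∑ j, ((r i * r j : ℝ) : ℂ) • (gellMann i * gellMann j) := by
  simp only [gmComb, Finset.sum_mul, Finset.mul_sum, Matrix.smul_mul, Matrix.mul_smul, smul_smul,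
    Complex.ofReal_mul]
  rw [Finset.sum_comm]
  exact Finset.sum_congr rfl fun i _ => Finset.sum_congr rfl fun j _ => by rw [mul_comm]

/-- The star square of `r` records the traces of `(∑ i, r i • G i) ^ 2` against the `G k`. -/
lemma trace_gmComb_sq_mul_gellMann (r : Fin 8 → ℝ) (k : Fin 8) :
    (gmComb r * gmComb r * gellMann k).trace
      = ((2 * (Real.sqrt 3)⁻¹ * starGM r r k : ℝ) : ℂ) := by
  rw [← ofReal_re_trace_mul (gmComb_sq_isHermitian r) (gellMann_isHermitian k)]
  congr 1
  have h3 : Real.sqrt 3 ≠ 0 := by positivity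
  -- `r i * r j` is symmetric, so both summands of the anticommutator in `dGM` contribute equally
  have key : ∑ i, ∑ j, r i * r j * (gellMann i * gellMann j * gellMann k).trace.re
      = ∑ i, ∑ j, r i * r j * (gellMann j * gellMann i * gellMann k).trace.re := by
    rw [Finset.sum_comm]
    exact Finset.sum_congr rfl fun i _ => Finset.sum_congr rfl fun j _ => by ring
  have hL : (gmComb r * gmComb r * gellMann k).trace.re
      = ∑ i, ∑ j, r i * r j * (gellMann i * gellMann j * gellMann k).trace.re := by
    rw [gmComb_sq_eq_sum]
    simp only [Finset.sum_mul, Matrix.trace_sum, Complex.re_sum, Matrix.smul_mul,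
      Matrix.trace_smul, smul_eq_mul, Complex.re_ofReal_mul]
  have hR : ∑ i, ∑ j, dGM i j k * r i * r j
      = (1 / 4) * (∑ i, ∑ j, r i * r j * (gellMann i * gellMann j * gellMann k).trace.re
        + ∑ i, ∑ j, r i * r j * (gellMann j * gellMann i * gellMann k).trace.re) := by
    simp only [← Finset.sum_add_distrib, Finset.mul_sum, dGM, Matrix.add_mul,
      Matrix.trace_add, Complex.add_re]
    exact Finset.sum_congr rfl fun i _ => Finset.sum_congr rfl fun j _ => by ring
  rw [starGM, hR, ← key, ← hL]
  field_simp
  ring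

/-- Up to the factor `1/√3`, the star product `r ⋆ r` gives the Gell-Mann coordinates of the
traceless part of `(∑ k, r k • G k) ^ 2`. -/
lemma gmComb_sq (r : Fin 8 → ℝ) :
    gmComb r * gmComb r = ((2 / 3 * ∑ k, r k ^ 2 : ℝ) : ℂ) • (1 : Matrix (Fin 3) (Fin 3) ℂ)
      + (((Real.sqrt 3)⁻¹ : ℝ) : ℂ) • gmComb (starGM r r) := by
  conv_lhs => rw [gellMann_expansion (gmComb r * gmComb r)]
  rw [trace_gmComb_sq]
  congr 1
  · congr 1
    push_cast; ring
  · rw [gmComb.eq_def (starGM r r), Finset.smul_sum]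
    refine Finset.sum_congr rfl fun k _ => ?_
    rw [trace_gmComb_sq_mul_gellMann, smul_smul]
    congr 1
    push_cast; ring

lemma trace_gmComb_cube (r : Fin 8 → ℝ) :
    (gmComb r * gmComb r * gmComb r).trace
      = ((2 * (Real.sqrt 3)⁻¹ * ∑ k, r k * starGM r r k : ℝ) : ℂ) := by
  rw [trace_mul_gmComb]
  simp only [trace_gmComb_sq_mul_gellMann]
  push_cast
  rw [Finset.mul_sum]
  exact Finset.sum_congr rfl fun k _ => by ring

/-- The identity and the Gell-Mann matrices are linearly independent over `ℝ`. -/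
lemma smul_one_add_gmComb_inj {a b : ℝ} {x y : Fin 8 → ℝ}
    (h : (a : ℂ) • (1 : Matrix (Fin 3) (Fin 3) ℂ) + gmComb x
      = (b : ℂ) • (1 : Matrix (Fin 3) (Fin 3) ℂ) + gmComb y) : a = b ∧ x = y := by
  constructor
  · have := congrArg Matrix.trace h
    simpa [Matrix.trace_add, trace_gmComb] using this
  · funext k
    have := congrArg (fun A => (A * gellMann k).trace) h
    simpa [Matrix.add_mul, Matrix.trace_add, trace_gellMann, trace_gmComb_mul_gellMann] using this

lemma gmComb_smul (c : ℝ) (r : Fin 8 → ℝ) : gmComb (c • r) = (c : ℂ) • gmComb r := by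
  simp only [gmComb, Finset.smul_sum, smul_smul, Pi.smul_apply, smul_eq_mul, Complex.ofReal_mul]

lemma gmComb_add (x y : Fin 8 → ℝ) : gmComb (x + y) = gmComb x + gmComb y := by
  simp [gmComb, add_smul, Finset.sum_add_distrib]

/-! ### Positivity from power traces -/

/-- Three reals with sum `1` are nonnegative exactly when their second and third elementary
symmetric functions, `(1 - p) / 2` and `(1 - 3 p + 2 q) / 6` in terms of the power sums `p` and `q`,
are nonnegative. -/
lemma nonneg_iff_power_sums {a b c p q : ℝ} (h1 : a + b + c = 1)
    (h2 : a ^ 2 + b ^ 2 + c ^ 2 = p) (h3 : a ^ 3 + b ^ 3 + c ^ 3 = q) :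
    (0 ≤ a ∧ 0 ≤ b ∧ 0 ≤ c) ↔ (p ≤ 1 ∧ 0 ≤ 1 - 3 * p + 2 * q) := by
  have e2 : 1 - p = 2 * (a * b + b * c + c * a) := by
    rw [← h2, show (1 : ℝ) = (a + b + c) ^ 2 by rw [h1]; norm_num]; ring
  have e3 : 1 - 3 * p + 2 * q = 6 * (a * b * c) := by
    have hc : c = 1 - a - b := by linarith
    rw [← h2, ← h3, hc]; ring
  constructor
  · rintro ⟨ha, hb, hc⟩
    constructor
    · have : 0 ≤ a * b + b * c + c * a := by positivity
      linarith
    · rw [e3]; positivity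
  · rintro ⟨hp, hq⟩
    have h2' : 0 ≤ a * b + b * c + c * a := by linarith
    have h3' : 0 ≤ a * b * c := by linarith
    -- at a negative `t`, the cubic `t³ - t² + e₂ t - e₃` is negative, so `t` is not a root
    have root : ∀ t : ℝ, t ^ 3 - t ^ 2 + (a * b + b * c + c * a) * t - a * b * c = 0 → 0 ≤ t := by
      intro t ht
      by_contra! hneg
      have k1 : t ^ 3 < 0 := Odd.pow_neg (by decide) hneg
      have k2 : (a * b + b * c + c * a) * t ≤ 0 := mul_nonpos_of_nonneg_of_nonpos h2' hneg.le
      nlinarith [sq_nonneg t]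
    have hc : c = 1 - a - b := by linarith
    refine ⟨root a ?_, root b ?_, root c ?_⟩ <;> · rw [hc]; ring

lemma trace_pow_eq_sum_eigenvalues_pow {A : Matrix (Fin 3) (Fin 3) ℂ} (hA : A.IsHermitian)
    (n : ℕ) : (A ^ n).trace = ∑ i, ((hA.eigenvalues i ^ n : ℝ) : ℂ) := by
  conv_lhs => rw [hA.spectral_theorem, ← map_pow]
  rw [Unitary.conjStarAlgAut_apply, Matrix.trace_mul_comm, ← mul_assoc]
  simp [Matrix.diagonal_pow, Matrix.trace_diagonal]

open ComplexOrder in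
/-- Positivity of a trace-one Hermitian `3 × 3` matrix, read off from its power traces. -/
lemma posSemidef_iff_power_traces {A : Matrix (Fin 3) (Fin 3) ℂ} (hA : A.IsHermitian)
    {p q : ℝ} (h1 : A.trace = 1) (h2 : (A ^ 2).trace = (p : ℂ)) (h3 : (A ^ 3).trace = (q : ℂ)) :
    A.PosSemidef ↔ (p ≤ 1 ∧ 0 ≤ 1 - 3 * p + 2 * q) := by
  rw [hA.posSemidef_iff_eigenvalues_nonneg]
  rw [← pow_one A] at h1
  rw [trace_pow_eq_sum_eigenvalues_pow hA] at h1 h2 h3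
  rw [Fin.sum_univ_three] at h1 h2 h3
  simp only [pow_one] at h1
  rw [← nonneg_iff_power_sums (a := hA.eigenvalues 0) (b := hA.eigenvalues 1)
    (c := hA.eigenvalues 2) (by exact_mod_cast h1) (by exact_mod_cast h2) (by exact_mod_cast h3)]
  simp [Pi.le_def, Fin.forall_fin_succ]

/-! ### Positivity and idempotency of `ρ` -/

open ComplexOrder in
theorem stmt_16 (r : Fin 8 → ℝ) (ρ : Matrix (Fin 3) (Fin 3) ℂ)
    (hρ : ρ = ((1 : ℂ) / 3)
      • ((1 : Matrix (Fin 3) (Fin 3) ℂ)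
          + ((Real.sqrt 3 : ℝ) : ℂ) • ∑ k, (r k : ℂ) • gellMann k)) :
    (ρ.PosSemidef ↔ (Real.sqrt (∑ k, (r k) ^ 2) ≤ 1
        ∧ 1 + 2 * (∑ k, r k * starGM r r k) ≥ 3 * ∑ k, r k * r k))
    ∧ (ρ ^ 2 = ρ ↔ (Real.sqrt (∑ k, (r k) ^ 2) = 1 ∧ starGM r r = r)) := by
  have hs2 := ofReal_sqrt_three_sq
  have hs0 : ((Real.sqrt 3 : ℝ) : ℂ) ≠ 0 := by
    intro h; rw [h] at hs2; norm_num at hs2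
  change ρ = ((1 : ℂ) / 3) • ((1 : Matrix (Fin 3) (Fin 3) ℂ)
          + ((Real.sqrt 3 : ℝ) : ℂ) • gmComb r) at hρ
  have hsq : ∑ k, r k * r k = ∑ k, r k ^ 2 := Finset.sum_congr rfl fun k _ => by ring
  have hexp : ρ ^ 2 = ((1 : ℂ) / 9) • ((1 : Matrix (Fin 3) (Fin 3) ℂ)
        + (2 * ((Real.sqrt 3 : ℝ) : ℂ)) • gmComb r
        + ((Real.sqrt 3 : ℝ) : ℂ) ^ 2 • (gmComb r * gmComb r)) := by
      rw [hρ, pow_two]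
      simp only [Matrix.smul_mul, Matrix.mul_smul, add_mul, mul_add, one_mul, mul_one]
      module
  constructor
  · have hH : ρ.IsHermitian := by
      rw [hρ, Matrix.IsHermitian, Matrix.conjTranspose_smul, Matrix.conjTranspose_add,
        Matrix.conjTranspose_smul, (gmComb_isHermitian r).eq]
      simp
    have h1 : ρ.trace = 1 := by
      simp [hρ, Matrix.trace_smul, Matrix.trace_add, trace_gmComb]
    have h2 : (ρ ^ 2).trace = (((1 + 2 * ∑ k, r k ^ 2) / 3 : ℝ) : ℂ) := by
      rw [hexp, hs2]
      simp only [Matrix.trace_smul, Matrix.trace_add, trace_gmComb, trace_gmComb_sq,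
        Matrix.trace_one, smul_eq_mul]
      push_cast [Fintype.card_fin]
      ring
    have h3 : (ρ ^ 3).trace
        = (((1 + 6 * ∑ k, r k ^ 2 + 2 * ∑ k, r k * starGM r r k) / 9 : ℝ) : ℂ) := by
      have : ρ ^ 3 = ((1 : ℂ) / 27) • ((1 : Matrix (Fin 3) (Fin 3) ℂ)
          + (3 * ((Real.sqrt 3 : ℝ) : ℂ)) • gmComb r
          + (3 * ((Real.sqrt 3 : ℝ) : ℂ) ^ 2) • (gmComb r * gmComb r)
          + (((Real.sqrt 3 : ℝ) : ℂ) ^ 3) • (gmComb r * gmComb r * gmComb r)) := by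
        rw [hρ, pow_succ, pow_two]
        simp only [Matrix.smul_mul, Matrix.mul_smul, add_mul, mul_add, one_mul, mul_one]
        module
      rw [this, pow_succ _ 2, hs2]
      simp only [Matrix.trace_smul, Matrix.trace_add, trace_gmComb, trace_gmComb_sq,
        trace_gmComb_cube, Matrix.trace_one, smul_eq_mul]
      push_cast [Fintype.card_fin]
      field_simp
      ring
    rw [posSemidef_iff_power_traces hH h1 h2 h3, Real.sqrt_le_one, hsq]
    constructor <;> rintro ⟨ha, hb⟩ <;> constructor <;> linarith
  · have hsqr : ρ ^ 2 = ((1 : ℂ) / 9) • (((1 + 2 * ∑ k, r k ^ 2 : ℝ) : ℂ)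
        • (1 : Matrix (Fin 3) (Fin 3) ℂ)
        + gmComb (Real.sqrt 3 • ((2 : ℝ) • r + starGM r r))) := by
      have hinv : ((Real.sqrt 3 : ℝ) : ℂ) ^ 2 * (((Real.sqrt 3)⁻¹ : ℝ) : ℂ)
          = ((Real.sqrt 3 : ℝ) : ℂ) := by
        push_cast; field_simp
      rw [hexp, gmComb_sq, gmComb_smul, gmComb_add, gmComb_smul, smul_add (_ ^ 2), smul_smul,
        smul_smul, hinv, hs2]
      push_cast
      module
    have hlin : ρ = ((1 : ℂ) / 9) • (((3 : ℝ) : ℂ) • (1 : Matrix (Fin 3) (Fin 3) ℂ)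
        + gmComb (Real.sqrt 3 • ((3 : ℝ) • r))) := by
      rw [hρ, gmComb_smul, gmComb_smul]
      push_cast
      module
    have h3 : Real.sqrt 3 ≠ 0 := by positivity
    rw [Real.sqrt_eq_one]
    constructor
    · intro h
      rw [hsqr] at h
      conv_rhs at h => rw [hlin]
      obtain ⟨hn, hv⟩ := smul_one_add_gmComb_inj
        (smul_right_injective _ (by norm_num : (1 : ℂ) / 9 ≠ 0) h)
      refine ⟨by linarith, ?_⟩
      funext k
      have := congrFun (smul_right_injective _ h3 hv) k
      simp at this
      linarith
    · rintro ⟨hn, hv⟩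
      rw [hsqr, hv, hn]
      conv_rhs => rw [hlin]
      rw [show (2 : ℝ) • r + r = (3 : ℝ) • r by module, show (1 + 2 * 1 : ℝ) = 3 by norm_num]
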